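/- Let p > 2, w(s) = (cosh s)^{-2/(p-2)}, and χ(s) = -((p-2)/(4(p-1))) (2 w(s) - w(s)^{p-1}). Then ∫_ℝ χ(s) w(s) ds = -( p(p-2)/(2(p-1)(p+2)) ) ∫_ℝ w(s)² ds. -/

import Mathlib

open MeasureTheory

lemma aux_cont (c : ℝ) : Continuous (fun s : ℝ => Real.cosh s ^ c) :=
  Real.continuous_cosh.rpow_const (fun s => Or.inl (Real.cosh_pos s).ne')

lemma aux_bound (b : ℝ) (hb : 0 < b) (s t : ℝ) (ht : t = s ∨ t = -s) :
    ‖Real.cosh s ^ (-b)‖ ≤ ‖Real.exp (-b * t) * (1 / 2 : ℝ) ^ (-b)‖ := by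
  have h1 : Real.exp t * (1 / 2) ≤ Real.cosh s := by
    rw [Real.cosh_eq]
    have := Real.exp_pos s
    have := Real.exp_pos (-s)
    rcases ht with rfl | rfl <;> linarith
  have h2 : Real.exp (-b * t) * (1 / 2 : ℝ) ^ (-b) = (Real.exp t * (1 / 2)) ^ (-b) := by
    rw [Real.mul_rpow (Real.exp_pos t).le (by norm_num), ← Real.exp_mul, mul_comm t]
  rw [h2, Real.norm_of_nonneg (Real.rpow_nonneg (Real.cosh_pos s).le _),
    Real.norm_of_nonneg (by positivity)]
  exact Real.rpow_le_rpow_of_nonpos (by positivity) h1 (by linarith)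

lemma aux_int (b : ℝ) (hb : 0 < b) : Integrable (fun s : ℝ => Real.cosh s ^ (-b)) := by
  rw [← integrableOn_univ, ← Set.Iic_union_Ioi (a := (0 : ℝ))]
  refine IntegrableOn.union ?_ ?_
  · have h : IntegrableOn (fun s : ℝ => Real.exp (-b * -s) * (1 / 2 : ℝ) ^ (-b)) (Set.Iic 0) := by
      have := (integrableOn_exp_mul_Iic hb 0).mul_const ((1 / 2 : ℝ) ^ (-b))
      simpa [IntegrableOn] using this
    exact Integrable.mono h (aux_cont _).aestronglyMeasurable
      (Filter.Eventually.of_forall fun s => aux_bound b hb s (-s) (Or.inr rfl))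
  · have h : IntegrableOn (fun s : ℝ => Real.exp (-b * s) * (1 / 2 : ℝ) ^ (-b)) (Set.Ioi 0) :=
      (integrableOn_exp_mul_Ioi (a := -b) (by linarith) 0).mul_const ((1 / 2 : ℝ) ^ (-b))
    exact Integrable.mono h (aux_cont _).aestronglyMeasurable
      (Filter.Eventually.of_forall fun s => aux_bound b hb s s (Or.inl rfl))

lemma aux_main (b : ℝ) (hb : 0 < b) :
    (b + 1) * ∫ s : ℝ, Real.cosh s ^ (-(b + 2)) = b * ∫ s : ℝ, Real.cosh s ^ (-b) := by
  have i1 := aux_int b hb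
  have i2 := aux_int (b + 2) (by linarith)
  have hd : ∀ x : ℝ, HasDerivAt (fun s => Real.sinh s * Real.cosh s ^ (-b - 1))
      ((b + 1) * Real.cosh x ^ (-(b + 2)) - b * Real.cosh x ^ (-b)) x := by
    intro x
    have hc := Real.cosh_pos x
    have := (Real.hasDerivAt_sinh x).mul
      ((Real.hasDerivAt_cosh x).rpow_const (p := -b - 1) (Or.inl hc.ne'))
    refine this.congr_deriv ?_
    have e0 : -b - 1 - 1 = -(b + 2) := by ring
    have e1 : Real.cosh x ^ (-b - 1) = Real.cosh x ^ (-(b + 2)) * Real.cosh x := by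
      rw [← Real.rpow_add_one hc.ne']; congr 1; ring
    have e2 : Real.cosh x ^ (-b) = Real.cosh x ^ (-(b + 2)) * Real.cosh x * Real.cosh x := by
      rw [← Real.rpow_add_one hc.ne', ← Real.rpow_add_one hc.ne']; congr 1; ring
    rw [e0, e1, e2]
    have := Real.cosh_sq x
    linear_combination (-(b + 1)) * Real.cosh x ^ (-(b + 2)) * (-this)
  have hf : Integrable (fun s => Real.sinh s * Real.cosh s ^ (-b - 1)) := by
    refine i1.mono (Real.continuous_sinh.mul (aux_cont _)).aestronglyMeasurable
      (Filter.Eventually.of_forall fun s => ?_)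
    have hc := Real.cosh_pos s
    have e1 : Real.cosh s ^ (-b) = Real.cosh s * Real.cosh s ^ (-b - 1) := by
      rw [mul_comm, ← Real.rpow_add_one hc.ne']; congr 1; ring
    rw [e1, norm_mul, norm_mul]
    refine mul_le_mul_of_nonneg_right ?_ (norm_nonneg _)
    rw [Real.norm_eq_abs, Real.norm_eq_abs]
    apply sq_le_sq.mp
    have := Real.cosh_sq s
    linarith
  have h0 := integral_eq_zero_of_hasDerivAt_of_integrable hd
    ((i2.const_mul _).sub (i1.const_mul _)) hf
  rw [integral_sub (i2.const_mul _) (i1.const_mul _), integral_const_mul, integral_const_mul] at h0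
  linarith



/-- For `p > 2`, `w(s) = (cosh s)^{-2/(p-2)}` and
`χ(s) = -((p-2)/(4(p-1)))(2w - w^{p-1})`, one has
`∫ χ w = -(p(p-2)/(2(p-1)(p+2))) ∫ w²`. -/
theorem statement11 (p : ℝ) (hp : 2 < p)
    (w : ℝ → ℝ) (hw : ∀ s, w s = Real.cosh s ^ (-(2 / (p - 2))))
    (χ : ℝ → ℝ) (hχ : ∀ s, χ s = -((p - 2) / (4 * (p - 1))) * (2 * w s - w s ^ (p - 1))) :
    (∫ s : ℝ, χ s * w s) =
      -(p * (p - 2) / (2 * (p - 1) * (p + 2))) * ∫ s : ℝ, w s ^ 2 := by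
  have hp2 : p - 2 ≠ 0 := by linarith
  have hp1 : p - 1 ≠ 0 := by linarith
  have hp3 : p + 2 ≠ 0 := by linarith
  have hb : 0 < 4 / (p - 2) := div_pos (by norm_num) (by linarith)
  set b := 4 / (p - 2) with hbdef
  have i1 := aux_int b hb
  have i2 := aux_int (b + 2) (by linarith)
  have hm := aux_main b hb
  have hsq : ∀ s, w s ^ 2 = Real.cosh s ^ (-b) := by
    intro s
    rw [hw, ← Real.rpow_natCast, ← Real.rpow_mul (Real.cosh_pos s).le]
    congr 1
    rw [hbdef]; push_cast; ring
  have hpw : ∀ s, w s ^ (p - 1) * w s = Real.cosh s ^ (-(b + 2)) := by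
    intro s
    rw [hw, ← Real.rpow_mul (Real.cosh_pos s).le, ← Real.rpow_add (Real.cosh_pos s)]
    congr 1
    rw [hbdef]; field_simp; ring
  have hχw : ∀ s, χ s * w s = -((p - 2) / (4 * (p - 1))) *
      (2 * Real.cosh s ^ (-b) - Real.cosh s ^ (-(b + 2))) := by
    intro s
    rw [hχ, ← hsq, ← hpw]; ring
  simp_rw [hχw, hsq]
  rw [integral_const_mul, integral_sub (i1.const_mul _) i2, integral_const_mul]
  generalize (∫ s : ℝ, Real.cosh s ^ (-b)) = I at *
  generalize (∫ s : ℝ, Real.cosh s ^ (-(b + 2))) = J at *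
  have hJ : J = 4 / (p + 2) * I := by
    rw [hbdef] at hm
    field_simp at hm ⊢
    linarith
  rw [hJ]
  field_simp
  ring
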